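/- Let A ⊆ ℝⁿ have finite positive Lebesgue measure, with the sets D_k(A) of the dyadic decomposition, and let K be the integer-valued random variable with P{K = k} = 2^{-nk}|D_k(A)|/Vₙ(A). Then E[K] ≤ h_{⊖[0,1]ⁿ}(A) + 2, where h_{⊖[0,1]ⁿ}(A) = ∫_{-∞}^{∞}(1{t≥0} - Vₙ(A ⊖ [0,2^{-t}]ⁿ)/Vₙ(A)) dt. -/

import Mathlib

open MeasureTheory

/-- The dyadic hypercube `C_{k,v} = 2^{-k}([0,1]ⁿ + v)`. -/
def dyadicCube (n : ℕ) (k : ℤ) (v : Fin n → ℤ) : Set (Fin n → ℝ) :=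
  {x | ∀ i, (2 : ℝ) ^ (-k) * (v i : ℝ) ≤ x i ∧ x i ≤ (2 : ℝ) ^ (-k) * ((v i : ℝ) + 1)}

/-- `D_k(A)`: positions of the maximal dyadic hypercubes of side `2^{-k}` contained in `A`. -/
def dyadicFamily (n : ℕ) (A : Set (Fin n → ℝ)) (k : ℤ) : Set (Fin n → ℤ) :=
  {v | dyadicCube n k v ⊆ A ∧ ¬ dyadicCube n (k - 1) (fun i => Int.fdiv (v i) 2) ⊆ A}

/-- The Minkowski erosion `A ⊖ B = {x : B + x ⊆ A}`. -/
def erosion {n : ℕ} (A B : Set (Fin n → ℝ)) : Set (Fin n → ℝ) :=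
  {x | ∀ b ∈ B, b + x ∈ A}

/-- The erosion entropy `h_{⊖[0,1]ⁿ}(A) = ∫ (1{t≥0} - Vₙ(A ⊖ [0,2^{-t}]ⁿ)/Vₙ(A)) dt`. -/
noncomputable def erosionEntropy (n : ℕ) (A : Set (Fin n → ℝ)) : ℝ :=
  ∫ t : ℝ, ((if 0 ≤ t then (1 : ℝ) else 0) -
    (volume (erosion A {x : Fin n → ℝ | ∀ i, x i ∈ Set.Icc (0 : ℝ) ((2 : ℝ) ^ (-t))})).toReal
      / (volume A).toReal)

/-!
Let `U k` be the union of the half-open dyadic cubes of side `2^{-k}` whose closures lie in `A`.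
These sets increase with `k`, and `K` is the first `k` for which `U k` contains a uniform point of
`A`. Hence `K` has distribution function `G t = Vₙ(U ⌊t⌋) / Vₙ(A)`, and by Fubini
`E[K] = ∫ (1{t ≥ 0} - G t) dt`.

Let `f t = Vₙ(A ⊖ [0,2^{-t}]ⁿ) / Vₙ(A)`. If `x + [0, 2 * 2^{-k}]ⁿ ⊆ A`, then this cube contains the
dyadic cube of side `2^{-k}` around `x + 2^{-k}(1, …, 1)`, so `f (k - 1) ≤ G k` and therefore
`f (t - 2) ≤ G t`. Translating `f` by `2` changes `∫ (1{t ≥ 0} - f t) dt` by exactly `2`.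

Integrability of `1{t ≥ 0} - f t` follows from that of `1{t ≥ 0} - G t`: the bound above controls
`t → -∞`. For `t → ∞`, a cube of side `2^{-k}` in `A` leaves a cube of side `2^{-k} - 2^{-t}` after
erosion, whence `f t ≥ G (t / 2) - n 2^{-t/2}` by Bernoulli's inequality.
-/

open ProbabilityTheory Filter Set

/-- The difference `1{0 ≤ t} - F t`. For a cumulative distribution function `F` its integral is the
mean of the distribution, and for the normalized volumes of erosions it is the erosion entropy. -/
noncomputable def heavisideSub (F : ℝ → ℝ) (t : ℝ) : ℝ := (if 0 ≤ t then 1 else 0) - F t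

lemma heavisideSub_indicator_Ici (a t : ℝ) :
    heavisideSub ((Ici a).indicator 1) t = (Ico 0 a).indicator 1 t - (Ico a 0).indicator 1 t := by
  simp only [heavisideSub, indicator_apply, mem_Ici, mem_Ico, Pi.one_apply]
  split_ifs <;> grind

lemma norm_heavisideSub_indicator_Ici (a t : ℝ) :
    ‖heavisideSub ((Ici a).indicator 1) t‖ = (Ico 0 a).indicator 1 t + (Ico a 0).indicator 1 t := by
  simp only [heavisideSub, indicator_apply, mem_Ici, mem_Ico, Pi.one_apply]
  split_ifs <;> simp <;> grind

lemma integrable_indicator_Ico_one (a b : ℝ) :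
    Integrable ((Ico a b).indicator (1 : ℝ → ℝ)) :=
  (integrable_indicator_iff measurableSet_Ico).2 (integrableOn_const (by simp))

lemma integrable_heavisideSub_indicator_Ici (a : ℝ) :
    Integrable (heavisideSub ((Ici a).indicator 1)) := by
  rw [funext (heavisideSub_indicator_Ici a)]
  exact (integrable_indicator_Ico_one 0 a).sub (integrable_indicator_Ico_one a 0)

lemma integral_heavisideSub_indicator_Ici (a : ℝ) :
    ∫ t, heavisideSub ((Ici a).indicator 1) t = a := by
  simp only [heavisideSub_indicator_Ici]
  rw [integral_sub (integrable_indicator_Ico_one 0 a) (integrable_indicator_Ico_one a 0),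
    integral_indicator_one measurableSet_Ico, integral_indicator_one measurableSet_Ico,
    Real.volume_real_Ico, Real.volume_real_Ico, sub_zero, zero_sub]
  exact posPart_sub_negPart a

lemma integral_norm_heavisideSub_indicator_Ici (a : ℝ) :
    ∫ t, ‖heavisideSub ((Ici a).indicator 1) t‖ = |a| := by
  simp only [norm_heavisideSub_indicator_Ici]
  rw [integral_add (integrable_indicator_Ico_one 0 a) (integrable_indicator_Ico_one a 0),
    integral_indicator_one measurableSet_Ico, integral_indicator_one measurableSet_Ico,
    Real.volume_real_Ico, Real.volume_real_Ico, sub_zero, zero_sub]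
  exact posPart_add_negPart a

section Mean

variable {ν : Measure ℝ}

lemma integrable_prod_heavisideSub_indicator_Ici (h : Integrable (fun x => x) ν) :
    Integrable (fun p : ℝ × ℝ => heavisideSub ((Ici p.1).indicator 1) p.2) (ν.prod volume) := by
  have h_meas : Measurable fun p : ℝ × ℝ => heavisideSub ((Ici p.1).indicator 1) p.2 := by
    refine (Measurable.ite (measurableSet_le measurable_const measurable_snd) measurable_const
      measurable_const).sub ?_
    exact measurable_const.indicator (measurableSet_le measurable_fst measurable_snd)
  refine (integrable_prod_iff h_meas.aestronglyMeasurable).2 ⟨?_, ?_⟩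
  · exact ae_of_all _ integrable_heavisideSub_indicator_Ici
  · simpa only [integral_norm_heavisideSub_indicator_Ici] using h.abs

variable [IsProbabilityMeasure ν]

lemma integral_heavisideSub_indicator_Ici_eq_heavisideSub_cdf (t : ℝ) :
    ∫ x, heavisideSub ((Ici x).indicator 1) t ∂ν = heavisideSub (cdf ν) t := by
  have h_indicator (x : ℝ) : (Ici x).indicator (1 : ℝ → ℝ) t = (Iic t).indicator 1 x := by
    simp only [indicator_apply, mem_Ici, mem_Iic, Pi.one_apply]
  simp only [heavisideSub, h_indicator]
  rw [integral_sub (integrable_const _) ((integrable_indicator_iff measurableSet_Iic).2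
    (integrable_const _).integrableOn), integral_indicator_one measurableSet_Iic, cdf_eq_real]
  simp only [integral_const, probReal_univ, one_smul]

lemma integrable_heavisideSub_cdf (h : Integrable (fun x => x) ν) :
    Integrable (heavisideSub (cdf ν)) := by
  simpa only [integral_heavisideSub_indicator_Ici_eq_heavisideSub_cdf] using
    (integrable_prod_heavisideSub_indicator_Ici h).integral_prod_right

lemma integral_heavisideSub_cdf (h : Integrable (fun x => x) ν) :
    ∫ t, heavisideSub (cdf ν) t = ∫ x, x ∂ν := by
  simp only [← integral_heavisideSub_indicator_Ici_eq_heavisideSub_cdf]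
  rw [← integral_integral_swap (integrable_prod_heavisideSub_indicator_Ici h)]
  simp only [integral_heavisideSub_indicator_Ici]

end Mean

lemma heavisideSub_comp_sub (f : ℝ → ℝ) (a t : ℝ) :
    heavisideSub (fun s => f (s - a)) t
      = heavisideSub f (t - a) + heavisideSub ((Ici a).indicator 1) t := by
  simp only [heavisideSub, indicator_apply, mem_Ici, Pi.one_apply, sub_nonneg]
  ring

lemma integrable_heavisideSub_comp_sub {f : ℝ → ℝ} (hf : Integrable (heavisideSub f)) (a : ℝ) :
    Integrable (heavisideSub fun t => f (t - a)) := by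
  rw [funext (heavisideSub_comp_sub f a)]
  exact (hf.comp_sub_right a).add (integrable_heavisideSub_indicator_Ici a)

lemma integral_heavisideSub_comp_sub {f : ℝ → ℝ} (hf : Integrable (heavisideSub f)) (a : ℝ) :
    ∫ t, heavisideSub (fun t => f (t - a)) t = (∫ t, heavisideSub f t) + a := by
  simp only [heavisideSub_comp_sub]
  rw [integral_add (hf.comp_sub_right a) (integrable_heavisideSub_indicator_Ici a),
    integral_sub_right_eq_self (heavisideSub f), integral_heavisideSub_indicator_Ici]

lemma integral_heavisideSub_le_of_comp_sub_le {f G : ℝ → ℝ} (hf : Integrable (heavisideSub f))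
    (hG : Integrable (heavisideSub G)) {a : ℝ} (h : ∀ t, f (t - a) ≤ G t) :
    ∫ t, heavisideSub G t ≤ (∫ t, heavisideSub f t) + a := by
  rw [← integral_heavisideSub_comp_sub hf a]
  exact integral_mono hG (integrable_heavisideSub_comp_sub hf a)
    fun t => sub_le_sub_left (h t) _

lemma locallyIntegrable_heavisideSub_of_monotone {f : ℝ → ℝ} (hf : Monotone f) :
    LocallyIntegrable (heavisideSub f) := by
  have h_step : Monotone fun t : ℝ => if 0 ≤ t then (1 : ℝ) else 0 := fun s t hst => by
    grind
  exact h_step.locallyIntegrable.sub hf.locallyIntegrable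

lemma integrable_heavisideSub_of_comp_sub_le {f G h : ℝ → ℝ} (hf : Monotone f)
    (hf0 : ∀ t, 0 ≤ f t) (hf1 : ∀ t, f t ≤ 1) (hG : Integrable (heavisideSub G)) {a r : ℝ}
    (hr : 0 < r) (h_shift : ∀ t, f (t - a) ≤ G t) (h_dilate : ∀ t, 0 ≤ t → G (r * t) - h t ≤ f t)
    (hh : IntegrableAtFilter h atTop) : Integrable (heavisideSub f) := by
  refine (locallyIntegrable_heavisideSub_of_monotone hf).integrable_of_isBigO_atBot_atTop
    (g := fun t => ‖heavisideSub G (t + a)‖) (g' := fun t => heavisideSub G (r * t) + h t)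
    (.of_norm_eventuallyLE ?_) ((hG.comp_add_right a).norm.integrableAtFilter _)
    (.of_norm_eventuallyLE ?_) (((hG.comp_mul_left' hr.ne').integrableAtFilter _).add hh)
  · filter_upwards [eventually_lt_atBot 0, eventually_lt_atBot (-a)] with t ht hta
    have h_le : f t ≤ G (t + a) := by simpa only [add_sub_cancel_right] using h_shift (t + a)
    rw [heavisideSub, heavisideSub, if_neg ht.not_ge, if_neg (by linarith), zero_sub, zero_sub,
      norm_neg, norm_neg, Real.norm_of_nonneg (hf0 t)]
    exact h_le.trans (Real.le_norm_self _)
  · filter_upwards [eventually_ge_atTop 0] with t ht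
    rw [heavisideSub, heavisideSub, if_pos ht, if_pos (by positivity),
      Real.norm_of_nonneg (sub_nonneg.2 (hf1 t))]
    linarith [h_dilate t ht]

section EntryIndex

variable {Ω : Type*} {U : ℤ → Set Ω}

/-- The first index at which a point enters the family `U` of sets; the junk value is `0` for a
point that lies in no `U k`, or in `U k` for arbitrarily small `k`. -/
noncomputable def entryIndex (U : ℤ → Set Ω) (x : Ω) : ℤ := sInf {k | x ∈ U k}

lemma entryIndex_le_iff (hU : Monotone U) (hbdd : BddBelow {k | (U k).Nonempty}) {x : Ω}
    (hx : ∃ k, x ∈ U k) {k : ℤ} : entryIndex U x ≤ k ↔ x ∈ U k := by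
  have h_nonempty : {k | x ∈ U k} ⊆ {k | (U k).Nonempty} := fun _ hk => ⟨x, hk⟩
  have hbdd_x : BddBelow {k | x ∈ U k} := hbdd.mono h_nonempty
  exact ⟨fun h => hU h (Int.csInf_mem hx hbdd_x), fun h => csInf_le hbdd_x h⟩

variable [MeasurableSpace Ω]

lemma measurable_entryIndex (hU : Monotone U) (hbdd : BddBelow {k | (U k).Nonempty})
    (hU_meas : ∀ k, MeasurableSet (U k)) : Measurable (entryIndex U) := by
  refine measurable_of_Iic fun k => ?_
  have h_preimage : entryIndex U ⁻¹' Iic k = U k ∪ {x | (∀ j, x ∉ U j) ∧ 0 ≤ k} := by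
    ext x
    by_cases hx : ∃ j, x ∈ U j
    · simp [entryIndex_le_iff hU hbdd hx, not_forall_not.2 hx]
    · have hx' := not_exists.1 hx
      simp [entryIndex, hx']
  rw [h_preimage]
  measurability

variable {μ : Measure Ω}

lemma entryIndex_preimage_Iic_ae_eq (hU : Monotone U) (hbdd : BddBelow {k | (U k).Nonempty})
    (hU_ae : ∀ᵐ x ∂μ, ∃ k, x ∈ U k) (k : ℤ) : entryIndex U ⁻¹' Iic k =ᵐ[μ] U k := by
  filter_upwards [hU_ae] with x hx
  exact propext (entryIndex_le_iff hU hbdd hx)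

lemma entryIndex_preimage_singleton_ae_eq (hU : Monotone U)
    (hbdd : BddBelow {k | (U k).Nonempty}) (hU_ae : ∀ᵐ x ∂μ, ∃ k, x ∈ U k) (k : ℤ) :
    entryIndex U ⁻¹' {k} =ᵐ[μ] (U k \ U (k - 1) : Set Ω) := by
  filter_upwards [hU_ae] with x hx
  refine propext ?_
  change entryIndex U x = k ↔ x ∈ U k ∧ x ∉ U (k - 1)
  rw [← entryIndex_le_iff hU hbdd hx, ← entryIndex_le_iff hU hbdd hx]
  lia

end EntryIndex

section IntegerValued

variable {Ω : Type*} [MeasurableSpace Ω] {μ : Measure Ω} {K : Ω → ℤ}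

lemma integrable_map_intCast_of_summable [IsFiniteMeasure μ] (hK : Measurable K)
    (h : Summable fun k : ℤ => (k : ℝ) * μ.real (K ⁻¹' {k})) :
    Integrable (fun x => x) (μ.map fun ω => (K ω : ℝ)) := by
  have hK_cast : Measurable fun ω => (K ω : ℝ) := measurable_from_top.comp hK
  refine (integrable_map_measure aestronglyMeasurable_id hK_cast.aemeasurable).2 ?_
  refine (integrable_map_measure (f := K) (g := fun k : ℤ => (k : ℝ))
    .of_discrete hK.aemeasurable).1 ?_
  rw [← Measure.sum_smul_dirac (μ.map K)]
  refine integrable_sum_dirac (fun k => measure_ne_top _ _) (h.abs.congr fun k => ?_)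
  rw [← measureReal_def, map_measureReal_apply hK (measurableSet_singleton k), abs_mul, mul_comm,
    abs_of_nonneg measureReal_nonneg, Real.norm_eq_abs]

lemma integral_map_intCast_eq_tsum (hK : Measurable K)
    (h : Integrable (fun x => x) (μ.map fun ω => (K ω : ℝ))) :
    ∫ x, x ∂(μ.map fun ω => (K ω : ℝ)) = ∑' k : ℤ, (k : ℝ) * μ.real (K ⁻¹' {k}) := by
  have hK_cast : Measurable fun ω => (K ω : ℝ) := measurable_from_top.comp hK
  have hK_int := (integrable_map_measure aestronglyMeasurable_id hK_cast.aemeasurable).1 h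
  have h_map : Integrable (fun k : ℤ => (k : ℝ)) (μ.map K) :=
    (integrable_map_measure .of_discrete hK.aemeasurable).2 hK_int
  rw [integral_map hK_cast.aemeasurable (f := fun x => x) aestronglyMeasurable_id,
    ← integral_map hK.aemeasurable (f := fun k : ℤ => (k : ℝ)) .of_discrete,
    integral_countable h_map]
  simp only [map_measureReal_apply hK (measurableSet_singleton _), smul_eq_mul, mul_comm]

lemma cdf_map_intCast [IsProbabilityMeasure μ] (hK : Measurable K) (t : ℝ) :
    cdf (μ.map fun ω => (K ω : ℝ)) t = μ.real (K ⁻¹' Iic ⌊t⌋) := by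
  have hK_cast : Measurable fun ω => (K ω : ℝ) := measurable_from_top.comp hK
  have := Measure.isProbabilityMeasure_map (μ := μ) hK_cast.aemeasurable
  rw [cdf_eq_real, map_measureReal_apply hK_cast measurableSet_Iic]
  congr 1
  ext ω
  exact (Int.le_floor (α := ℝ)).symm

end IntegerValued

section Dyadic

variable {n : ℕ} {A : Set (Fin n → ℝ)} {k : ℤ} {v : Fin n → ℤ} {x : Fin n → ℝ}

lemma mem_dyadicCube_iff :
    x ∈ dyadicCube n k v ↔ ∀ i, (v i : ℝ) ≤ 2 ^ k * x i ∧ 2 ^ k * x i ≤ v i + 1 := by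
  have h_pos : (0 : ℝ) < 2 ^ k := by positivity
  simp only [dyadicCube, mem_ofPred_eq, zpow_neg, inv_mul_le_iff₀ h_pos, le_inv_mul_iff₀ h_pos]

lemma dyadicCube_eq_Icc :
    dyadicCube n k v = Icc (fun i => (2 : ℝ) ^ (-k) * v i) (fun i => 2 ^ (-k) * (v i + 1)) := by
  ext x
  exact forall_and

lemma two_zpow_neg_pow (n : ℕ) (k : ℤ) : ((2 : ℝ) ^ (-k)) ^ n = 2 ^ (-((n : ℤ) * k)) := by
  rw [← zpow_natCast, ← zpow_mul, neg_mul, mul_comm]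

lemma volume_real_dyadicCube (n : ℕ) (k : ℤ) (v : Fin n → ℤ) :
    volume.real (dyadicCube n k v) = 2 ^ (-((n : ℤ) * k)) := by
  have h_le : (fun i => (2 : ℝ) ^ (-k) * v i) ≤ fun i => (2 : ℝ) ^ (-k) * (v i + 1) := fun i =>
    mul_le_mul_of_nonneg_left (lt_add_one _).le (by positivity)
  rw [dyadicCube_eq_Icc, measureReal_def, Real.volume_Icc_pi_toReal h_le]
  simp only [mul_add, mul_one, add_sub_cancel_left, Finset.prod_const, Finset.card_univ,
    Fintype.card_fin, two_zpow_neg_pow]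

lemma dyadicCube_subset_dyadicCube_fdiv (n : ℕ) (k : ℤ) (v : Fin n → ℤ) :
    dyadicCube n k v ⊆ dyadicCube n (k - 1) fun i => Int.fdiv (v i) 2 := by
  intro x hx
  rw [mem_dyadicCube_iff] at hx ⊢
  intro i
  have h_halve : (2 : ℝ) ^ (k - 1) * x i = 2 ^ k * x i / 2 := by
    rw [zpow_sub_one₀ two_ne_zero]; ring
  have h_lower : (2 * Int.fdiv (v i) 2 : ℝ) ≤ v i := by
    exact_mod_cast (by grind [Int.fdiv_eq_ediv_of_nonneg] : 2 * Int.fdiv (v i) 2 ≤ v i)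
  have h_upper : (v i + 1 : ℝ) ≤ 2 * (Int.fdiv (v i) 2 + 1) := by
    exact_mod_cast (by grind [Int.fdiv_eq_ediv_of_nonneg] : v i + 1 ≤ 2 * (Int.fdiv (v i) 2 + 1))
  constructor <;> linarith [hx i]

/-- The position `v` of the half-open dyadic cube `2^{-k}([0,1)ⁿ + v)` that contains `x`. -/
noncomputable def dyadicIndex (k : ℤ) (x : Fin n → ℝ) : Fin n → ℤ := fun i => ⌊(2 : ℝ) ^ k * x i⌋

lemma mem_dyadicCube_dyadicIndex (k : ℤ) (x : Fin n → ℝ) :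
    x ∈ dyadicCube n k (dyadicIndex k x) :=
  mem_dyadicCube_iff.2 fun _ => ⟨Int.floor_le _, (Int.lt_floor_add_one _).le⟩

lemma fdiv_dyadicIndex (k : ℤ) (x : Fin n → ℝ) :
    (fun i => Int.fdiv (dyadicIndex k x i) 2) = dyadicIndex (k - 1) x := by
  funext i
  have h_halve : (2 : ℝ) ^ (k - 1) * x i = 2 ^ k * x i / (2 : ℕ) := by
    rw [zpow_sub_one₀ two_ne_zero]; push_cast; ring
  rw [dyadicIndex, dyadicIndex, h_halve, Int.floor_div_natCast,
    Int.fdiv_eq_ediv_of_nonneg _ zero_le_two, Nat.cast_ofNat]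

lemma measurable_dyadicIndex (k : ℤ) : Measurable (dyadicIndex (n := n) k) :=
  measurable_pi_lambda _ fun i => ((measurable_pi_apply i).const_mul _).floor

/-- The union over `v ∈ S` of the boxes `2^{-k}([0,c)ⁿ + v)`, the lower corners of the half-open
dyadic cubes at level `k` (the whole cubes when `c = 1`). -/
def cornerBoxes (k : ℤ) (S : Set (Fin n → ℤ)) (c : ℝ) : Set (Fin n → ℝ) :=
  {x | dyadicIndex k x ∈ S ∧ ∀ i, Int.fract ((2 : ℝ) ^ k * x i) < c}

lemma mem_cornerBoxes_one {S : Set (Fin n → ℤ)} : x ∈ cornerBoxes k S 1 ↔ dyadicIndex k x ∈ S :=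
  and_iff_left fun _ => Int.fract_lt_one _

lemma cornerBoxes_singleton {c : ℝ} (hc : c ≤ 1) :
    cornerBoxes k {v} c =
      univ.pi fun i => Ico ((2 : ℝ) ^ (-k) * v i) ((2 : ℝ) ^ (-k) * (v i + c)) := by
  have h_pos : (0 : ℝ) < 2 ^ k := by positivity
  ext x
  simp only [cornerBoxes, dyadicIndex, mem_ofPred_eq, mem_singleton_iff, funext_iff, ← forall_and,
    mem_univ_pi, mem_Ico, zpow_neg, inv_mul_le_iff₀ h_pos, lt_inv_mul_iff₀ h_pos]
  refine forall_congr' fun i => ⟨?_, ?_⟩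
  · rintro ⟨h_floor, h_fract⟩
    rw [Int.fract, h_floor] at h_fract
    exact ⟨h_floor ▸ Int.floor_le _, by linarith⟩
  · rintro ⟨h_lower, h_upper⟩
    have h_floor : ⌊(2 : ℝ) ^ k * x i⌋ = v i := Int.floor_eq_iff.2 ⟨h_lower, by linarith⟩
    exact ⟨h_floor, by rw [Int.fract, h_floor]; linarith⟩

lemma measurableSet_cornerBoxes (k : ℤ) (S : Set (Fin n → ℤ)) (c : ℝ) :
    MeasurableSet (cornerBoxes k S c) := by
  refine (measurable_dyadicIndex k S.to_countable.measurableSet).inter ?_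
  change MeasurableSet {x : Fin n → ℝ | ∀ i, Int.fract ((2 : ℝ) ^ k * x i) < c}
  rw [ofPred_forall]
  exact .iInter fun i =>
    measurableSet_lt ((measurable_pi_apply i).const_mul _).fract measurable_const

lemma volume_cornerBoxes (k : ℤ) (S : Set (Fin n → ℤ)) {c : ℝ} (hc : c ≤ 1) :
    volume (cornerBoxes k S c) = S.encard * ENNReal.ofReal (2 ^ (-k) * c) ^ n := by
  have h_iUnion : cornerBoxes k S c = ⋃ v : S, cornerBoxes k {v.1} c := by
    ext x; simp [cornerBoxes]
  have h_disjoint : Pairwise fun v w : S => Disjoint (cornerBoxes k {v.1} c)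
      (cornerBoxes k {w.1} c) := fun v w hvw =>
    disjoint_left.2 fun x hxv hxw => hvw (Subtype.ext (hxv.1.symm.trans hxw.1))
  rw [h_iUnion, measure_iUnion h_disjoint fun v => measurableSet_cornerBoxes _ _ _]
  simp only [cornerBoxes_singleton hc, Real.volume_pi_Ico, mul_add, add_sub_cancel_left,
    Finset.prod_const, Finset.card_univ, Fintype.card_fin, ENNReal.tsum_const]
  rfl

lemma volume_real_cornerBoxes (k : ℤ) (S : Set (Fin n → ℤ)) {c : ℝ} (hc0 : 0 ≤ c) (hc1 : c ≤ 1) :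
    volume.real (cornerBoxes k S c) = 2 ^ (-((n : ℤ) * k)) * S.ncard * c ^ n := by
  have h_card : (S.encard : ENNReal).toReal = S.ncard := by
    rcases S.finite_or_infinite with hS | hS
    · simp [← hS.cast_ncard_eq]
    · simp [hS.encard_eq, hS.ncard]
  rw [measureReal_def, volume_cornerBoxes k S hc1, ENNReal.toReal_mul, ENNReal.toReal_pow,
    ENNReal.toReal_ofReal (by positivity), mul_pow, two_zpow_neg_pow, h_card]
  ring

/-- The inner approximation of `A` at level `k`: the union of the half-open dyadic cubes of side
`2^{-k}` whose closures lie in `A`. -/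
def dyadicInner (A : Set (Fin n → ℝ)) (k : ℤ) : Set (Fin n → ℝ) :=
  {x | dyadicCube n k (dyadicIndex k x) ⊆ A}

lemma dyadicInner_eq_cornerBoxes (A : Set (Fin n → ℝ)) (k : ℤ) :
    dyadicInner A k = cornerBoxes k {v | dyadicCube n k v ⊆ A} 1 := by
  ext x
  rw [mem_cornerBoxes_one]
  rfl

lemma measurableSet_dyadicInner (A : Set (Fin n → ℝ)) (k : ℤ) :
    MeasurableSet (dyadicInner A k) := by
  rw [dyadicInner_eq_cornerBoxes]
  exact measurableSet_cornerBoxes _ _ _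

lemma dyadicInner_subset (A : Set (Fin n → ℝ)) (k : ℤ) : dyadicInner A k ⊆ A :=
  fun x hx => hx (mem_dyadicCube_dyadicIndex k x)

lemma monotone_dyadicInner (A : Set (Fin n → ℝ)) : Monotone (dyadicInner A) := by
  refine monotone_int_of_le_succ fun k x hx => ?_
  have h_parent := dyadicCube_subset_dyadicCube_fdiv n (k + 1) (dyadicIndex (k + 1) x)
  rw [fdiv_dyadicIndex, add_sub_cancel_right] at h_parent
  exact h_parent.trans hx

lemma dyadicInner_sdiff_dyadicInner (A : Set (Fin n → ℝ)) (k : ℤ) :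
    dyadicInner A k \ dyadicInner A (k - 1) = cornerBoxes k (dyadicFamily n A k) 1 := by
  ext x
  rw [mem_cornerBoxes_one]
  simp only [dyadicFamily, dyadicInner, Set.mem_sdiff, mem_ofPred_eq, fdiv_dyadicIndex]

lemma interior_subset_iUnion_dyadicInner (A : Set (Fin n → ℝ)) :
    interior A ⊆ ⋃ k, dyadicInner A k := by
  intro x hx
  obtain ⟨ε, hε, h_ball⟩ := Metric.isOpen_iff.1 isOpen_interior x hx
  obtain ⟨k, hk⟩ := exists_pow_lt_of_lt_one hε (one_half_lt_one (α := ℝ))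
  refine mem_iUnion.2 ⟨k, fun y hy => interior_subset (h_ball ?_)⟩
  have h_dist : dist y x ≤ (1 / 2) ^ k := by
    refine (dist_pi_le_iff (by positivity)).2 fun i => ?_
    have hxi := mem_dyadicCube_dyadicIndex k x i
    have hyi := hy i
    have h_side : (2 : ℝ) ^ (-(k : ℤ)) = (1 / 2) ^ k := by simp
    rw [h_side] at hxi hyi
    rw [Real.dist_eq, abs_le]
    constructor <;> linarith
  exact h_dist.trans_lt hk

lemma bddBelow_nonempty_dyadicInner (hn : n ≠ 0) (hA : volume A ≠ ⊤) :
    BddBelow {k | (dyadicInner A k).Nonempty} := by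
  obtain ⟨L, hL⟩ := pow_unbounded_of_one_lt (volume.real A) one_lt_two
  refine ⟨-L, fun k ⟨x, hx⟩ => ?_⟩
  have h_volume : (2 : ℝ) ^ (-((n : ℤ) * k)) < 2 ^ (L : ℤ) := by
    rw [← volume_real_dyadicCube n k (dyadicIndex k x), zpow_natCast]
    exact (measureReal_mono hx hA).trans_lt hL
  have h_exponent := (zpow_lt_zpow_iff_right₀ one_lt_two).1 h_volume
  have hn' : (1 : ℤ) ≤ n := mod_cast Nat.one_le_iff_ne_zero.2 hn
  nlinarith

end Dyadic

section Erosion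

variable {n : ℕ} {A B C : Set (Fin n → ℝ)}

lemma erosion_subset_erosion (A : Set (Fin n → ℝ)) (h : B ⊆ C) : erosion A C ⊆ erosion A B :=
  fun _ hx b hb => hx b (h hb)

lemma erosion_subset (h : 0 ∈ B) : erosion A B ⊆ A := fun x hx => by
  simpa only [zero_add] using hx 0 h

/-- The eroding cube `[0, 2^{-t}]ⁿ` of the erosion entropy. -/
def erodingCube (n : ℕ) (t : ℝ) : Set (Fin n → ℝ) := {x | ∀ i, x i ∈ Icc (0 : ℝ) (2 ^ (-t))}

lemma zero_mem_erodingCube (n : ℕ) (t : ℝ) : 0 ∈ erodingCube n t :=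
  fun _ => ⟨le_rfl, by simp only [Pi.zero_apply]; positivity⟩

lemma antitone_erodingCube (n : ℕ) : Antitone (erodingCube n) := fun _ _ hst _ hx i =>
  ⟨(hx i).1, (hx i).2.trans (Real.rpow_le_rpow_of_exponent_le one_le_two (neg_le_neg hst))⟩

/-- The fraction of the volume of `A` that survives erosion by the cube `[0, 2^{-t}]ⁿ`. -/
noncomputable def erosionRatio (A : Set (Fin n → ℝ)) (t : ℝ) : ℝ :=
  volume.real (erosion A (erodingCube n t)) / volume.real A

lemma erosionRatio_nonneg (A : Set (Fin n → ℝ)) (t : ℝ) : 0 ≤ erosionRatio A t := by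
  unfold erosionRatio; positivity

lemma erosionRatio_le_one (hA : volume A ≠ ⊤) (t : ℝ) : erosionRatio A t ≤ 1 :=
  div_le_one_of_le₀ (measureReal_mono (erosion_subset (zero_mem_erodingCube n t)) hA)
    measureReal_nonneg

lemma monotone_erosionRatio (hA : volume A ≠ ⊤) : Monotone (erosionRatio A) := fun _ t hst =>
  div_le_div_of_nonneg_right (measureReal_mono
    (erosion_subset_erosion A (antitone_erodingCube n hst))
    (measure_ne_top_of_subset (erosion_subset (zero_mem_erodingCube n t)) hA)) measureReal_nonneg

lemma erosionEntropy_eq_integral_heavisideSub (A : Set (Fin n → ℝ)) :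
    erosionEntropy n A = ∫ t, heavisideSub (erosionRatio A) t := rfl

-- If `x` survives erosion by a cube of side `2 * 2^{-k}`, then the dyadic cube containing
-- `x + 2^{-k}(1, …, 1)` lies in `x + [0, 2 * 2^{-k}]ⁿ`, hence in `A`.
lemma add_mem_dyadicInner_of_mem_erosion {k : ℤ} {x : Fin n → ℝ}
    (hx : x ∈ erosion A (erodingCube n (k - 1))) : (x + fun _ => 2 ^ (-k)) ∈ dyadicInner A k := by
  intro y hy
  suffices h_mem : y - x ∈ erodingCube n (k - 1) by
    simpa only [sub_add_cancel] using hx _ h_mem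
  have h_pos : (0 : ℝ) < 2 ^ k := by positivity
  have h_side : (2 : ℝ) ^ (-((k : ℝ) - 1)) = (2 ^ k)⁻¹ * 2 := by
    rw [neg_sub, sub_eq_add_neg, Real.rpow_add two_pos, Real.rpow_one, Real.rpow_neg zero_le_two,
      Real.rpow_intCast, mul_comm]
  have h_index (i : Fin n) : dyadicIndex k (x + fun _ => 2 ^ (-k)) i = ⌊(2 : ℝ) ^ k * x i⌋ + 1 := by
    rw [dyadicIndex, Pi.add_apply, mul_add, zpow_neg, mul_inv_cancel₀ h_pos.ne', Int.floor_add_one]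
  intro i
  have hyi := mem_dyadicCube_iff.1 hy i
  rw [h_index, Int.cast_add, Int.cast_one] at hyi
  have h_floor := Int.floor_le ((2 : ℝ) ^ k * x i)
  have h_lt_floor := Int.lt_floor_add_one ((2 : ℝ) ^ k * x i)
  rw [h_side, mem_Icc, le_inv_mul_iff₀ h_pos, Pi.sub_apply, mul_sub, sub_nonneg]
  exact ⟨le_of_mul_le_mul_left (by linarith) h_pos, by linarith⟩

lemma volume_real_erosion_le_volume_real_dyadicInner (hA : volume A ≠ ⊤) (k : ℤ) :
    volume.real (erosion A (erodingCube n (k - 1))) ≤ volume.real (dyadicInner A k) := by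
  have h_shift : volume.real ((· + fun _ : Fin n => (2 : ℝ) ^ (-k)) ⁻¹' dyadicInner A k)
      = volume.real (dyadicInner A k) := by
    simp only [measureReal_def, measure_preimage_add_right]
  rw [← h_shift]
  refine measureReal_mono (fun x => add_mem_dyadicInner_of_mem_erosion) ?_
  rw [measure_preimage_add_right]
  exact measure_ne_top_of_subset (dyadicInner_subset A k) hA

lemma cornerBoxes_subset_erosion (A : Set (Fin n → ℝ)) (k : ℤ) (t : ℝ) :
    cornerBoxes k {v | dyadicCube n k v ⊆ A} (1 - 2 ^ (k - t)) ⊆ erosion A (erodingCube n t) := by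
  rintro x ⟨hx_cube, hx_fract⟩ b hb
  refine hx_cube (mem_dyadicCube_iff.2 fun i => ?_)
  have h_side : (2 : ℝ) ^ k * 2 ^ (-t) = 2 ^ (k - t) := by
    rw [sub_eq_add_neg, Real.rpow_add two_pos, Real.rpow_intCast]
  have hb0 : 0 ≤ (2 : ℝ) ^ k * b i := mul_nonneg (by positivity) (hb i).1
  have hb1 : (2 : ℝ) ^ k * b i ≤ 2 ^ (k - t) := h_side ▸ by gcongr; exact (hb i).2
  have hxi := hx_fract i
  have h_floor := Int.floor_le ((2 : ℝ) ^ k * x i)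
  rw [Int.fract] at hxi
  simp only [dyadicIndex, Pi.add_apply, mul_add]
  constructor <;> linarith

lemma one_sub_mul_volume_real_dyadicInner_le (hA : volume A ≠ ⊤) {k : ℤ} {t : ℝ} (hkt : k ≤ t) :
    (1 - n * 2 ^ (k - t)) * volume.real (dyadicInner A k)
      ≤ volume.real (erosion A (erodingCube n t)) := by
  have h_pos : (0 : ℝ) < 2 ^ (k - t) := by positivity
  have h_le_one : (2 : ℝ) ^ (k - t) ≤ 1 :=
    Real.rpow_le_one_of_one_le_of_nonpos one_le_two (sub_nonpos.2 hkt)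
  have h_bernoulli : 1 - n * (2 : ℝ) ^ (k - t) ≤ (1 - 2 ^ (k - t)) ^ n := by
    simpa only [mul_neg, ← sub_eq_add_neg] using
      one_add_mul_le_pow (show -2 ≤ -(2 : ℝ) ^ (k - t) by linarith) n
  calc (1 - n * 2 ^ (k - t)) * volume.real (dyadicInner A k)
      ≤ (1 - 2 ^ (k - t)) ^ n * volume.real (dyadicInner A k) := by gcongr
    _ = volume.real (cornerBoxes k {v | dyadicCube n k v ⊆ A} (1 - 2 ^ (k - t))) := by
        rw [dyadicInner_eq_cornerBoxes, volume_real_cornerBoxes _ _ zero_le_one le_rfl,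
          volume_real_cornerBoxes _ _ (by linarith) (by linarith)]
        ring
    _ ≤ volume.real (erosion A (erodingCube n t)) :=
        measureReal_mono (cornerBoxes_subset_erosion A k t)
          (measure_ne_top_of_subset (erosion_subset (zero_mem_erodingCube n t)) hA)

end Erosion

lemma integrableAtFilter_mul_two_rpow_neg_atTop (c : ℝ) {r : ℝ} (hr : 0 < r) :
    IntegrableAtFilter (fun t : ℝ => c * 2 ^ (-(r * t))) atTop := by
  have h_exp (t : ℝ) : (2 : ℝ) ^ (-(r * t)) = Real.exp (-(Real.log 2 * r) * t) := by
    rw [Real.rpow_def_of_pos two_pos]; ring_nf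
  have h_rate : 0 < Real.log 2 * r := mul_pos (Real.log_pos one_lt_two) hr
  simp only [h_exp]
  exact ⟨Ioi 0, Ioi_mem_atTop 0, (exp_neg_integrableOn_Ioi 0 h_rate).const_mul c⟩

section DyadicLevel

lemma cond_real_apply_of_subset {Ω : Type*} [MeasurableSpace Ω] (μ : Measure Ω) {s t : Set Ω}
    (hs : MeasurableSet s) (hts : t ⊆ s) : μ[|s].real t = μ.real t / μ.real s := by
  rw [measureReal_def, cond_apply hs, inter_eq_right.2 hts, ENNReal.toReal_mul, ENNReal.toReal_inv,
    inv_mul_eq_div, ← measureReal_def, ← measureReal_def]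

variable {n : ℕ} {A : Set (Fin n → ℝ)}

/-- The random variable `K`: the index of the side `2^{-k}` of the maximal dyadic cube of `A`
containing a point, as a function on `ℝⁿ`. Its law is taken under the uniform measure
`volume[|A]`. -/
noncomputable def dyadicLevel (A : Set (Fin n → ℝ)) : (Fin n → ℝ) → ℤ :=
  entryIndex (dyadicInner A)

lemma measurable_dyadicLevel (hn : n ≠ 0) (hfin : volume A ≠ ⊤) : Measurable (dyadicLevel A) :=
  measurable_entryIndex (monotone_dyadicInner A) (bddBelow_nonempty_dyadicInner hn hfin)
    (measurableSet_dyadicInner A)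

lemma ae_cond_exists_mem_dyadicInner (hA : MeasurableSet A) (hb : volume (frontier A) = 0) :
    ∀ᵐ x ∂volume[|A], ∃ k, x ∈ dyadicInner A k := by
  have h_frontier : ∀ᵐ x ∂volume[|A], x ∉ frontier A :=
    cond_absolutelyContinuous.ae_le (measure_eq_zero_iff_ae_notMem.1 hb)
  filter_upwards [ae_cond_mem hA, h_frontier] with x hxA hx
  exact mem_iUnion.1 (interior_subset_iUnion_dyadicInner A (self_sdiff_frontier A ▸ ⟨hxA, hx⟩))

lemma cond_real_dyadicLevel_preimage_singleton (hn : n ≠ 0) (hA : MeasurableSet A)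
    (hfin : volume A ≠ ⊤) (hb : volume (frontier A) = 0) (k : ℤ) :
    volume[|A].real (dyadicLevel A ⁻¹' {k})
      = 2 ^ (-((n : ℤ) * k)) * (dyadicFamily n A k).ncard / volume.real A := by
  have h_ae := entryIndex_preimage_singleton_ae_eq (monotone_dyadicInner A)
    (bddBelow_nonempty_dyadicInner hn hfin) (ae_cond_exists_mem_dyadicInner hA hb) k
  rw [dyadicLevel, measureReal_congr h_ae, cond_real_apply_of_subset _ hA
    (sdiff_subset.trans (dyadicInner_subset A k)), dyadicInner_sdiff_dyadicInner,
    volume_real_cornerBoxes _ _ zero_le_one le_rfl, one_pow, mul_one]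

/-- The law of `K` on the real line, for a uniform point of `A`. -/
noncomputable def dyadicLevelLaw (A : Set (Fin n → ℝ)) : Measure ℝ :=
  volume[|A].map fun x => (dyadicLevel A x : ℝ)

lemma isProbabilityMeasure_dyadicLevelLaw (hn : n ≠ 0) (h0 : volume A ≠ 0) (hfin : volume A ≠ ⊤) :
    IsProbabilityMeasure (dyadicLevelLaw A) := by
  have := cond_isProbabilityMeasure_of_finite h0 hfin
  exact Measure.isProbabilityMeasure_map
    (measurable_from_top.comp (measurable_dyadicLevel hn hfin)).aemeasurable

lemma cdf_dyadicLevelLaw (hn : n ≠ 0) (hA : MeasurableSet A) (h0 : volume A ≠ 0)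
    (hfin : volume A ≠ ⊤) (hb : volume (frontier A) = 0) (t : ℝ) :
    cdf (dyadicLevelLaw A) t = volume.real (dyadicInner A ⌊t⌋) / volume.real A := by
  have := cond_isProbabilityMeasure_of_finite h0 hfin
  have h_ae := entryIndex_preimage_Iic_ae_eq (monotone_dyadicInner A)
    (bddBelow_nonempty_dyadicInner hn hfin) (ae_cond_exists_mem_dyadicInner hA hb) ⌊t⌋
  rw [dyadicLevelLaw, cdf_map_intCast (measurable_dyadicLevel hn hfin), dyadicLevel,
    measureReal_congr h_ae, cond_real_apply_of_subset _ hA (dyadicInner_subset A _)]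

lemma erosionRatio_sub_two_le_cdf (hn : n ≠ 0) (hA : MeasurableSet A) (h0 : volume A ≠ 0)
    (hfin : volume A ≠ ⊤) (hb : volume (frontier A) = 0) (t : ℝ) :
    erosionRatio A (t - 2) ≤ cdf (dyadicLevelLaw A) t := by
  rw [cdf_dyadicLevelLaw hn hA h0 hfin hb]
  calc erosionRatio A (t - 2)
      ≤ erosionRatio A (⌊t⌋ - 1) :=
        monotone_erosionRatio hfin (by linarith [Int.lt_floor_add_one t])
    _ ≤ volume.real (dyadicInner A ⌊t⌋) / volume.real A :=
        div_le_div_of_nonneg_right (volume_real_erosion_le_volume_real_dyadicInner hfin _)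
          measureReal_nonneg

-- The level `⌊t / 2⌋` balances coarse cubes against an eroding cube that is small next to them.
lemma cdf_sub_le_erosionRatio (hn : n ≠ 0) (hA : MeasurableSet A) (h0 : volume A ≠ 0)
    (hfin : volume A ≠ ⊤) (hb : volume (frontier A) = 0) {t : ℝ} (ht : 0 ≤ t) :
    cdf (dyadicLevelLaw A) (2⁻¹ * t) - n * 2 ^ (-(2⁻¹ * t)) ≤ erosionRatio A t := by
  rw [cdf_dyadicLevelLaw hn hA h0 hfin hb]
  set k := ⌊2⁻¹ * t⌋
  set p := volume.real (dyadicInner A k) / volume.real A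
  have hk : (k : ℝ) ≤ 2⁻¹ * t := Int.floor_le _
  have hp1 : p ≤ 1 :=
    div_le_one_of_le₀ (measureReal_mono (dyadicInner_subset A k) hfin) measureReal_nonneg
  have h_pow : (2 : ℝ) ^ (k - t) ≤ 2 ^ (-(2⁻¹ * t)) :=
    Real.rpow_le_rpow_of_exponent_le one_le_two (by linarith)
  calc p - n * 2 ^ (-(2⁻¹ * t))
      ≤ p - n * (2 : ℝ) ^ (k - t) * p := by
        have h_le : n * (2 : ℝ) ^ (k - t) * p ≤ n * 2 ^ (-(2⁻¹ * t)) :=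
          (mul_le_of_le_one_right (by positivity) hp1).trans (by gcongr)
        exact sub_le_sub_left h_le p
    _ = (1 - n * 2 ^ (k - t)) * volume.real (dyadicInner A k) / volume.real A := by
        rw [mul_div_assoc]; ring
    _ ≤ erosionRatio A t :=
        div_le_div_of_nonneg_right (one_sub_mul_volume_real_dyadicInner_le hfin (by linarith))
          measureReal_nonneg

lemma integrable_heavisideSub_erosionRatio (hn : n ≠ 0) (hA : MeasurableSet A)
    (h0 : volume A ≠ 0) (hfin : volume A ≠ ⊤) (hb : volume (frontier A) = 0)
    (h_law : Integrable (fun x => x) (dyadicLevelLaw A)) :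
    Integrable (heavisideSub (erosionRatio A)) := by
  have := isProbabilityMeasure_dyadicLevelLaw hn h0 hfin
  exact integrable_heavisideSub_of_comp_sub_le (monotone_erosionRatio hfin) (erosionRatio_nonneg A)
    (erosionRatio_le_one hfin) (integrable_heavisideSub_cdf h_law) (by norm_num)
    (erosionRatio_sub_two_le_cdf hn hA h0 hfin hb)
    (fun _ => cdf_sub_le_erosionRatio hn hA h0 hfin hb)
    (integrableAtFilter_mul_two_rpow_neg_atTop n (by norm_num))

end DyadicLevel

/-- If `K` is the size index of the dyadic hypercube containing a uniform point of `A`,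
i.e. `P{K = k} = 2^{-nk}|D_k(A)|/Vₙ(A)`, then `E[K] ≤ h_{⊖[0,1]ⁿ}(A) + 2`. -/
theorem stmt_7 (n : ℕ) (hn : 0 < n) (A : Set (Fin n → ℝ)) (hA : MeasurableSet A)
    (h0 : 0 < volume A) (hfin : volume A ≠ ⊤) (hb : volume (frontier A) = 0)
    (hsum : Summable (fun k : ℤ => (k : ℝ) *
      ((2 : ℝ) ^ (-((n : ℤ) * k)) * ((dyadicFamily n A k).ncard : ℝ) / (volume A).toReal))) :
    (∑' k : ℤ, (k : ℝ) *
        ((2 : ℝ) ^ (-((n : ℤ) * k)) * ((dyadicFamily n A k).ncard : ℝ) / (volume A).toReal))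
      ≤ erosionEntropy n A + 2 := by
  have hn := hn.ne'
  have := cond_isProbabilityMeasure_of_finite h0.ne' hfin
  have := isProbabilityMeasure_dyadicLevelLaw hn h0.ne' hfin
  have hK := measurable_dyadicLevel hn hfin
  simp only [← measureReal_def, ← cond_real_dyadicLevel_preimage_singleton hn hA hfin hb] at hsum ⊢
  have h_law : Integrable (fun x => x) (dyadicLevelLaw A) :=
    integrable_map_intCast_of_summable hK hsum
  calc _ = ∫ x, x ∂dyadicLevelLaw A := (integral_map_intCast_eq_tsum hK h_law).symm
    _ = ∫ t, heavisideSub (cdf (dyadicLevelLaw A)) t := (integral_heavisideSub_cdf h_law).symm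
    _ ≤ (∫ t, heavisideSub (erosionRatio A) t) + 2 :=
        integral_heavisideSub_le_of_comp_sub_le
          (integrable_heavisideSub_erosionRatio hn hA h0.ne' hfin hb h_law)
          (integrable_heavisideSub_cdf h_law) (erosionRatio_sub_two_le_cdf hn hA h0.ne' hfin hb)
    _ = erosionEntropy n A + 2 := by rw [erosionEntropy_eq_integral_heavisideSub]
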